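/- Let (P,≤) be a finite poset with a coloring κ : P → C satisfying: (a) if x is covered by y in P, or if x and y are distinct and incomparable, then κ(x) ≠ κ(y); (b) for each c ∈ C, the set κ⁻¹({c}) is totally ordered. Then for every order filter F of P and every color c ∈ C, the symmetric difference of F and S_c(F) has at most one element. -/

import Mathlib

/-- `F` is an order filter of the poset `α`: upward closed subset. -/
def IsOrderFilter {α : Type*} [PartialOrder α] (F : Set α) : Prop :=
  ∀ ⦃x y : α⦄, x ∈ F → x ≤ y → y ∈ F

/-- `A_c(F)`: the union of all order filters `F'` with `F' \ F ⊆ κ⁻¹({c})`. -/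
def Aop {α C : Type*} [PartialOrder α] (κ : α → C) (c : C) (F : Set α) : Set α :=
  ⋃₀ {F' : Set α | IsOrderFilter F' ∧ F' \ F ⊆ κ ⁻¹' {c}}

/-- `R_c(F)`: the intersection of all order filters `F'` with `F \ F' ⊆ κ⁻¹({c})`. -/
def Rop {α C : Type*} [PartialOrder α] (κ : α → C) (c : C) (F : Set α) : Set α :=
  ⋂₀ {F' : Set α | IsOrderFilter F' ∧ F \ F' ⊆ κ ⁻¹' {c}}

open Classical in
/-- `S_c(F) := (A_c(F) \ F) ∪ R_c(F)` if this is an order filter, and `F` otherwise. -/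
noncomputable def Sop {α C : Type*} [PartialOrder α] (κ : α → C) (c : C) (F : Set α) : Set α :=
  if IsOrderFilter ((Aop κ c F \ F) ∪ Rop κ c F) then (Aop κ c F \ F) ∪ Rop κ c F else F

/-!
The symmetric difference of two upper sets is order-convex: if `x ≤ y` both lie in it, then they
lie on the same side of it, and so does everything between them. Since `F` and `S_c(F)` are both
order filters and differ only in elements of color `c`, two distinct elements of their symmetric
difference would be comparable and bound an interval all of whose elements have color `c`. Such an
interval would contain a covering pair of equal colors.
-/

theorem IsOrderFilter.isUpperSet {α : Type*} [PartialOrder α] {F : Set α} (hF : IsOrderFilter F) :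
    IsUpperSet F :=
  fun _ _ hxy hx ↦ hF hx hxy

section Order

variable {α : Type*}

theorem ordConnected_symmDiff_of_isUpperSet [Preorder α] {s t : Set α} (hs : IsUpperSet s)
    (ht : IsUpperSet t) : (symmDiff s t).OrdConnected := by
  refine ⟨?_⟩
  rintro x (⟨hxs, -⟩ | ⟨hxt, -⟩) y (⟨-, hyt⟩ | ⟨-, hys⟩) z ⟨hxz, hzy⟩
  · exact .inl ⟨hs hxz hxs, fun hzt ↦ hyt (ht hzy hzt)⟩
  · exact absurd (hs (hxz.trans hzy) hxs) hys
  · exact absurd (ht (hxz.trans hzy) hxt) hyt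
  · exact .inr ⟨ht hxz hxt, fun hzs ↦ hys (hs hzy hzs)⟩

theorem subsingleton_of_ordConnected_of_isChain [PartialOrder α] {s : Set α}
    (hs : s.OrdConnected) (hchain : IsChain (· ≤ ·) s)
    (hIcc : ∀ ⦃x y : α⦄, x < y → ¬ Set.Icc x y ⊆ s) : s.Subsingleton := by
  have eq_of_le : ∀ ⦃x y⦄, x ∈ s → y ∈ s → x ≤ y → x = y := fun x y hx hy hxy ↦
    hxy.eq_of_not_lt fun hlt ↦ hIcc hlt (hs.out hx hy)
  intro x hx y hy
  rcases hchain.total hx hy with hxy | hyx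
  · exact eq_of_le hx hy hxy
  · exact (eq_of_le hy hx hyx).symm

theorem not_Icc_subset_fiber_of_covBy_ne {C : Type*} [Preorder α] [IsStronglyAtomic α]
    {κ : α → C} (hκ : ∀ x y : α, x ⋖ y → κ x ≠ κ y) {x y : α} (hxy : x < y) (c : C) :
    ¬ Set.Icc x y ⊆ κ ⁻¹' {c} := by
  intro hc
  obtain ⟨z, hxz, hzy⟩ := exists_covBy_le_of_lt hxy
  have hx : κ x = c := hc ⟨le_rfl, hxy.le⟩
  have hz : κ z = c := hc ⟨hxz.le, hzy⟩
  exact hκ x z hxz (hx.trans hz.symm)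

end Order

section Coloring

variable {α C : Type*} [PartialOrder α] {κ : α → C} {c : C} {F : Set α}

theorem Aop_diff_subset_fiber : Aop κ c F \ F ⊆ κ ⁻¹' {c} := by
  rintro x ⟨⟨G, ⟨-, hGF⟩, hxG⟩, hxF⟩
  exact hGF ⟨hxG, hxF⟩

theorem diff_Rop_subset_fiber : F \ Rop κ c F ⊆ κ ⁻¹' {c} := by
  rintro x ⟨hxF, hxR⟩
  by_contra hxc
  exact hxR fun G ⟨_, hFG⟩ ↦ by_contra fun hxG ↦ hxc (hFG ⟨hxF, hxG⟩)

theorem Rop_subset (hF : IsOrderFilter F) : Rop κ c F ⊆ F :=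
  Set.sInter_subset_of_mem ⟨hF, by simp⟩

theorem isOrderFilter_Sop (hF : IsOrderFilter F) : IsOrderFilter (Sop κ c F) := by
  unfold Sop
  split_ifs with hS
  exacts [hS, hF]

theorem symmDiff_Sop_subset_fiber (hF : IsOrderFilter F) :
    symmDiff F (Sop κ c F) ⊆ κ ⁻¹' {c} := by
  unfold Sop
  split_ifs
  · rintro x (⟨hxF, hxS⟩ | ⟨hxA | hxR, hxF⟩)
    · exact diff_Rop_subset_fiber ⟨hxF, fun hxR ↦ hxS (.inr hxR)⟩
    · exact Aop_diff_subset_fiber hxA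
    · exact absurd (Rop_subset hF hxR) hxF
  · simp

theorem symmDiff_Sop_subsingleton_general (hchain : IsChain (· ≤ ·) (κ ⁻¹' {c}))
    (hIcc : ∀ ⦃x y : α⦄, x < y → ¬ Set.Icc x y ⊆ κ ⁻¹' {c}) (hF : IsOrderFilter F) :
    (symmDiff F (Sop κ c F)).Subsingleton :=
  have hsub : symmDiff F (Sop κ c F) ⊆ κ ⁻¹' {c} := symmDiff_Sop_subset_fiber hF
  subsingleton_of_ordConnected_of_isChain
    (ordConnected_symmDiff_of_isUpperSet hF.isUpperSet (isOrderFilter_Sop hF).isUpperSet)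
    (hchain.mono hsub) fun _ _ hxy hD ↦ hIcc hxy (hD.trans hsub)

end Coloring

/-- In a finite colored poset where (a) elements in a covering relation, or distinct
incomparable elements, have distinct colors, and (b) each color class is totally ordered,
the symmetric difference of `F` and `S_c(F)` has at most one element. -/
theorem symmDiff_Sop_subsingleton {α C : Type*} [PartialOrder α] [Fintype α] (κ : α → C)
    (ha : ∀ x y : α, ((x ⋖ y) ∨ (x ≠ y ∧ ¬ x ≤ y ∧ ¬ y ≤ x)) → κ x ≠ κ y)
    (hb : ∀ c : C, ∀ x ∈ κ ⁻¹' {c}, ∀ y ∈ κ ⁻¹' {c}, x ≤ y ∨ y ≤ x)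
    (F : Set α) (hF : IsOrderFilter F) (c : C) :
    (symmDiff F (Sop κ c F)).Subsingleton :=
  symmDiff_Sop_subsingleton_general (fun x hx y hy _ ↦ hb c x hx y hy)
    (fun _ _ hlt ↦ not_Icc_subset_fiber_of_covBy_ne (fun x y hxy ↦ ha x y (.inl hxy)) hlt c) hF
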